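/- arXiv:2601.07804 — 2 statements merged into one kernel-verified Lean document; each statement's English description precedes it below -/
import Mathlib

section
/- Let F be the local Hutchinson–Barnsley operator of a local IFS on a compact metric space X with local attractor A := ⋃{B ⊆ X : F(B) = B}, and assume A ≠ ∅. If A_0 ⊆ X is compact, F-positively invariant (F(A_0) ⊆ A_0), and A ⊆ A_0, then hausdorffDist(F^i(A_0), A) → 0 as i → ∞; that is, every compact F-positively invariant superset of A lies in the topological basin of attraction of A. -/
open Filter

/-!
The operator `F` is monotone, so the iterates of a compact set `A₀` with `F A₀ ⊆ A₀` form a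
decreasing sequence of compact sets, and every fixed point of `F` inside `A₀` lies in their
intersection. A point of all the sets `F (F^[i] A₀)` has a closed fibre meeting every `F^[i] A₀`;
by Cantor's intersection theorem the fibre meets their intersection. Hence `F` commutes with this
intersection, which is therefore the largest fixed point of `F`, that is, the local attractor.
Finally, a decreasing sequence of compact sets converges to its intersection.
-/

open Function Metric Set Topology

theorem sSup_fixedPoints_eq_iInf_iterate {α : Type*} [CompleteLattice α] {F : α → α}
    (hF : Monotone F) {a : α} (ha : F a ≤ a) (hle : sSup (fixedPoints F) ≤ a)
    (hcomm : F (⨅ i, F^[i] a) = ⨅ i, F (F^[i] a)) :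
    sSup (fixedPoints F) = ⨅ i, F^[i] a := by
  have hanti : Antitone fun i => F^[i] a := hF.antitone_iterate_of_map_le ha
  apply le_antisymm
  · refine sSup_le fun b hb => le_iInf fun i => ?_
    calc b = F^[i] b := (iterate_fixed hb i).symm
      _ ≤ F^[i] a := hF.iterate i ((le_sSup hb).trans hle)
  · have hfixed : F (⨅ i, F^[i] a) = ⨅ i, F^[i] a := by
      simp only [hcomm, ← iterate_succ_apply' F]
      exact hanti.iInf_nat_add 1
    exact le_sSup hfixed

theorem tendsto_hausdorffEDist_iInter_of_antitone {X κ : Type*} [EMetricSpace X] [Nonempty κ]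
    [Preorder κ] [IsDirectedOrder κ] {K : κ → Set X} (hK : Antitone K)
    (hKc : ∀ i, IsCompact (K i)) :
    Tendsto (fun i => hausdorffEDist (K i) (⋂ i, K i)) atTop (𝓝 0) := by
  rw [ENNReal.tendsto_nhds_zero]
  intro ε hε
  have hopen : IsOpen {x | infEDist x (⋂ i, K i) < ε} :=
    isOpen_lt continuous_infEDist continuous_const
  obtain ⟨N, hN⟩ : ∃ N, K N ⊆ {x | infEDist x (⋂ i, K i) < ε} :=
    exists_subset_nhds_of_isCompact hK.directed_ge hKc fun x hx =>
      hopen.mem_nhds ((infEDist_zero_of_mem hx).trans_lt hε)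
  filter_upwards [eventually_ge_atTop N] with i hi
  refine hausdorffEDist_le_of_infEDist (fun x hx => (hN (hK hi hx)).le) fun x hx => ?_
  rw [infEDist_zero_of_mem (mem_iInter.1 hx i)]
  exact zero_le

/-- The local Hutchinson–Barnsley operator of the maps `f j` with domains `Xs j`. Each `f j` is a
total function whose values outside `Xs j` are ignored, and its target may differ from its source;
a local IFS is the case `X = Y`. -/
def localHutchinson {X Y ι : Type*} (Xs : ι → Set X) (f : ι → X → Y) (B : Set X) : Set Y :=
  ⋃ j, f j '' (B ∩ Xs j)

/-- The local attractor of a local IFS: the union of all sets fixed by its local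
Hutchinson–Barnsley operator. -/
def localAttractor {X ι : Type*} (Xs : ι → Set X) (f : ι → X → X) : Set X :=
  ⋃₀ fixedPoints (localHutchinson Xs f)

section LocalHutchinson

variable {X Y ι : Type*} {Xs : ι → Set X}

theorem monotone_localHutchinson (Xs : ι → Set X) (f : ι → X → Y) :
    Monotone (localHutchinson Xs f) := fun _ _ hBC =>
  iUnion_mono fun _ => image_mono (inter_subset_inter_left _ hBC)

theorem mem_localHutchinson_iff_inter_fiber_nonempty {f : ι → X → Y} {B : Set X} {y : Y} :
    y ∈ localHutchinson Xs f B ↔ (B ∩ ⋃ j, Xs j ∩ f j ⁻¹' {y}).Nonempty := by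
  simp only [localHutchinson, Set.Nonempty, mem_iUnion, mem_image, mem_inter_iff, mem_preimage,
    mem_singleton_iff]
  grind

variable [TopologicalSpace X] [Finite ι]

theorem isCompact_localHutchinson [TopologicalSpace Y] (hXs : ∀ j, IsClosed (Xs j))
    {f : ι → X → Y} (hf : ∀ j, ContinuousOn (f j) (Xs j)) {B : Set X} (hB : IsCompact B) :
    IsCompact (localHutchinson Xs f B) :=
  isCompact_iUnion fun j =>
    (hB.inter_right (hXs j)).image_of_continuousOn ((hf j).mono inter_subset_right)

theorem isCompact_iterate_localHutchinson (hXs : ∀ j, IsClosed (Xs j))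
    {f : ι → X → X} (hf : ∀ j, ContinuousOn (f j) (Xs j)) {B : Set X} (hB : IsCompact B) (i : ℕ) :
    IsCompact ((localHutchinson Xs f)^[i] B) :=
  Iterate.rec IsCompact hB (fun _ => isCompact_localHutchinson hXs hf) i

theorem localHutchinson_iInter_of_directed [T2Space X] [TopologicalSpace Y] [T1Space Y]
    (hXs : ∀ j, IsClosed (Xs j)) {f : ι → X → Y} (hf : ∀ j, ContinuousOn (f j) (Xs j))
    {κ : Type*} [Nonempty κ] {K : κ → Set X} (hK : Directed (· ⊇ ·) K)
    (hKc : ∀ i, IsCompact (K i)) :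
    localHutchinson Xs f (⋂ i, K i) = ⋂ i, localHutchinson Xs f (K i) := by
  refine Subset.antisymm (monotone_localHutchinson Xs f).map_iInf_le fun y hy => ?_
  simp only [mem_iInter, mem_localHutchinson_iff_inter_fiber_nonempty] at hy ⊢
  have hfiber : IsClosed (⋃ j, Xs j ∩ f j ⁻¹' {y}) :=
    isClosed_iUnion_of_finite fun j =>
      (hf j).preimage_isClosed_of_isClosed (hXs j) isClosed_singleton
  rw [iInter_inter]
  exact IsCompact.nonempty_iInter_of_directed_nonempty_isCompact_isClosed _
    (Directed.mono_comp (· ⊇ ·) (g := (· ∩ _)) (fun _ _ => inter_subset_inter_left _) hK) hy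
    (fun i => (hKc i).inter_right hfiber) (fun i => (hKc i).isClosed.inter hfiber)

theorem localAttractor_eq_iInter_iterate [T2Space X] (hXs : ∀ j, IsClosed (Xs j))
    {f : ι → X → X} (hf : ∀ j, ContinuousOn (f j) (Xs j)) {A₀ : Set X} (hA₀ : IsCompact A₀)
    (hinv : localHutchinson Xs f A₀ ⊆ A₀) (hsub : localAttractor Xs f ⊆ A₀) :
    localAttractor Xs f = ⋂ i, (localHutchinson Xs f)^[i] A₀ :=
  have hmono := monotone_localHutchinson Xs f
  sSup_fixedPoints_eq_iInf_iterate hmono hinv hsub <|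
    localHutchinson_iInter_of_directed hXs hf (hmono.antitone_iterate_of_map_le hinv).directed_ge
      (isCompact_iterate_localHutchinson hXs hf hA₀)

end LocalHutchinson

/-- Stated with `hausdorffEDist` because `hausdorffDist` takes the junk value `0` between a nonempty
set and an empty attractor. -/
theorem posInvariant_superset_in_basin_general {X ι : Type*} [EMetricSpace X] [Finite ι]
    {Xs : ι → Set X} (hXs : ∀ j, IsClosed (Xs j))
    {f : ι → X → X} (hf : ∀ j, ContinuousOn (f j) (Xs j)) {A₀ : Set X} (hA₀ : IsCompact A₀)
    (hinv : localHutchinson Xs f A₀ ⊆ A₀) (hsub : localAttractor Xs f ⊆ A₀) :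
    Tendsto (fun i => hausdorffEDist ((localHutchinson Xs f)^[i] A₀) (localAttractor Xs f))
      atTop (𝓝 0) := by
  rw [localAttractor_eq_iInter_iterate hXs hf hA₀ hinv hsub]
  exact tendsto_hausdorffEDist_iInter_of_antitone
    ((monotone_localHutchinson Xs f).antitone_iterate_of_map_le hinv)
    (isCompact_iterate_localHutchinson hXs hf hA₀)

/-- If the local attractor `A` of a local IFS is nonempty and
`A₀` is a compact `F`-positively invariant set containing `A`, then the iterates
`F^[i] A₀` converge to `A` in the Hausdorff distance; i.e. every compact
`F`-positively invariant superset of `A` lies in the topological basin of `A`. -/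
theorem posInvariant_superset_in_basin {X : Type*} [MetricSpace X] [CompactSpace X]
    {n : ℕ} (hn : 0 < n)
    (Xs : Fin n → Set X) (hXs : ∀ j, IsClosed (Xs j))
    (f : Fin n → X → X) (hf : ∀ j, ContinuousOn (f j) (Xs j))
    (F : Set X → Set X) (hF : ∀ B, F B = ⋃ j, f j '' (B ∩ Xs j))
    (A : Set X) (hA : A = ⋃₀ {B : Set X | F B = B}) (hAne : A.Nonempty)
    (A₀ : Set X) (hA₀ : IsCompact A₀) (hinv : F A₀ ⊆ A₀) (hsub : A ⊆ A₀) :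
    Tendsto (fun i : ℕ => Metric.hausdorffDist (F^[i] A₀) A) atTop (nhds 0) := by
  obtain rfl : F = localHutchinson Xs f := funext hF
  subst hA
  exact (ENNReal.tendsto_toReal ENNReal.zero_ne_top).comp
    (posInvariant_superset_in_basin_general hXs hf hA₀ hinv hsub)
end

section
/- Let a contractive local IFS on a compact metric space X have local attractor A ≠ ∅, code space Σ and code map π. Define the extended shift space Σ̂ := {(b, a) : b ∈ Σ and a is an admissible itinerary from π(b)}. Then: (1) {π(b) : (b,a) ∈ Σ̂ for some a} = A^∞; (2) the extended two-sided shift ŝ(b, a) := (b ∗ a(0), σa), where σa := (j ↦ a(j+1)), maps Σ̂ into Σ̂, and moreover π(b ∗ a(0)) = f_{a(0)}(π(b)) for every (b,a) ∈ Σ̂. -/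
/-- The cylinder sets of a local IFS: `cylinder f Xs k b` is the set
`V_b(k+1)` of the left-infinite word encoded by `b : ℕ → Fin n`. -/
def cylinder {X : Type*} {n : ℕ} (f : Fin n → X → X) (Xs : Fin n → Set X) :
    ℕ → (ℕ → Fin n) → Set X
  | 0, b => f (b 0) '' Xs (b 0)
  | k + 1, b => f (b 0) '' (cylinder f Xs k (fun j => b (j + 1)) ∩ Xs (b 0))

/-- The code space of a local IFS: the set of left-infinite words all of whose
cylinder sets are nonempty. -/
def codeSpace {X : Type*} {n : ℕ} (f : Fin n → X → X) (Xs : Fin n → Set X) :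
    Set (ℕ → Fin n) :=
  {b | ∀ k : ℕ, (cylinder f Xs k b).Nonempty}

/-- Concatenation `b ∗ j` of a left-infinite word `b` with a symbol `j`. -/
def concat {n : ℕ} (b : ℕ → Fin n) (j : Fin n) : ℕ → Fin n
  | 0 => j
  | k + 1 => b k

/-- The orbit of a point `x` of a local IFS directed by the itinerary `a`. -/
def orbitSeq {X : Type*} {n : ℕ} (f : Fin n → X → X) (x : X) (a : ℕ → Fin n) : ℕ → X
  | 0 => x
  | i + 1 => f (a i) (orbitSeq f x a i)

/-- The extended shift space `Σ̂` of a local IFS relative to the code map `π`: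
pairs `(b, a)` where `b` lies in the code space and `a` is an admissible
itinerary from `π b`. -/
def extShiftSpace {X : Type*} {n : ℕ} (f : Fin n → X → X) (Xs : Fin n → Set X)
    (π : (ℕ → Fin n) → X) : Set ((ℕ → Fin n) × (ℕ → Fin n)) :=
  {p | p.1 ∈ codeSpace f Xs ∧ ∀ i : ℕ, orbitSeq f (π p.1) p.2 i ∈ Xs (p.2 i)}

/-!
Call `b` an address of `x` if `x` lies in every cylinder set of `b`. Contraction shrinks the
cylinder sets of a word to zero diameter, so an address determines its point. Addresses behave well
under the maps: if `x ∈ X_{b(0)}` has address `σb`, then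
`f_{b(0)} x` has address `b`, which gives `π (b ∗ j) = f_j (π b)`.

The local attractor is the greatest fixed point of the Hutchinson–Barnsley operator, so by
Knaster–Tarski it contains every set `B ⊆ F(B)`. The set `π(Σ)` is one of these: points chosen in
`V_{σb}(k) ∩ X_{b(0)}` converge to `π(σb)`, which therefore lies in the closed set `X_{b(0)}`, so
that `π b = f_{b(0)}(π(σb))`. Conversely, choosing preimages forever shows that every point of the
attractor has an address. Hence `A = π(Σ)`, and attaching admissible itineraries gives `A^∞`.
-/

open Filter Topology Metric
open scoped ENNReal NNReal

section LocalIFS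

variable {X : Type*} {n : ℕ} {f : Fin n → X → X} {Xs : Fin n → Set X}

/-- The local Hutchinson–Barnsley operator `F` of a local IFS, bundled as a monotone map so that its
greatest fixed point `(hutchinson f Xs).gfp` is available; this is the local attractor. -/
def hutchinson (f : Fin n → X → X) (Xs : Fin n → Set X) : Set X →o Set X where
  toFun B := ⋃ j, f j '' (B ∩ Xs j)
  monotone' _ _ h := Set.iUnion_mono fun _ => Set.image_mono (Set.inter_subset_inter_left _ h)

theorem mem_hutchinson {B : Set X} {x : X} :
    x ∈ hutchinson f Xs B ↔ ∃ j, ∃ y ∈ B ∩ Xs j, f j y = x :=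
  Set.mem_iUnion

/-- The word `b` is an address of the point `x` if `x` lies in all cylinder sets of `b`. A code map
is then a function that sends each word of the code space to a point having it as an address. -/
def IsAddress (f : Fin n → X → X) (Xs : Fin n → Set X) (b : ℕ → Fin n) (x : X) : Prop :=
  ∀ k, x ∈ cylinder f Xs k b

theorem IsAddress.mem_codeSpace {b : ℕ → Fin n} {x : X} (h : IsAddress f Xs b x) :
    b ∈ codeSpace f Xs :=
  fun k => ⟨x, h k⟩

theorem IsAddress.map {b : ℕ → Fin n} {x : X} (h : IsAddress f Xs (fun j => b (j + 1)) x)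
    (hx : x ∈ Xs (b 0)) : IsAddress f Xs b (f (b 0) x)
  | 0 => ⟨x, hx, rfl⟩
  | k + 1 => ⟨x, ⟨h k, hx⟩, rfl⟩

theorem IsAddress.map_concat {b : ℕ → Fin n} {x : X} {j : Fin n} (h : IsAddress f Xs b x)
    (hx : x ∈ Xs j) : IsAddress f Xs (concat b j) (f j x) :=
  IsAddress.map (b := concat b j) h hx

theorem shift_mem_codeSpace {b : ℕ → Fin n} (hb : b ∈ codeSpace f Xs) :
    (fun j => b (j + 1)) ∈ codeSpace f Xs := by
  intro k
  obtain ⟨_, y, ⟨hy, _⟩, _⟩ := hb (k + 1)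
  exact ⟨y, hy⟩

theorem exists_isAddress_of_subset_hutchinson {B : Set X} (hB : B ⊆ hutchinson f Xs B) {x : X}
    (hx : x ∈ B) : ∃ b, IsAddress f Xs b x := by
  have exists_preimage (y : B) : ∃ (j : Fin n) (w : B), (w : X) ∈ Xs j ∧ f j w = y := by
    obtain ⟨j, w, ⟨hwB, hwj⟩, hw⟩ := mem_hutchinson.1 (hB y.2)
    exact ⟨j, ⟨w, hwB⟩, hwj, hw⟩
  choose symbol pre pre_mem map_pre using exists_preimage
  have mem_cylinder (k : ℕ) (y : B) : (y : X) ∈ cylinder f Xs k fun i => symbol (pre^[i] y) := by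
    induction k generalizing y with
    | zero => exact ⟨pre y, pre_mem y, map_pre y⟩
    | succ k ih => exact ⟨pre y, ⟨ih (pre y), pre_mem y⟩, map_pre y⟩
  exact ⟨fun i => symbol (pre^[i] ⟨x, hx⟩), fun k => mem_cylinder k ⟨x, hx⟩⟩

theorem orbitSeq_shift (x : X) (a : ℕ → Fin n) (i : ℕ) :
    orbitSeq f (f (a 0) x) (fun j => a (j + 1)) i = orbitSeq f x a (i + 1) := by
  induction i with
  | zero => rfl
  | succ i ih => exact congrArg (f (a (i + 1))) ih

theorem image_extShiftSpace (π : (ℕ → Fin n) → X) :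
    (fun p : (ℕ → Fin n) × (ℕ → Fin n) => π p.1) '' extShiftSpace f Xs π
      = {x ∈ π '' codeSpace f Xs | ∃ a : ℕ → Fin n, ∀ i : ℕ, orbitSeq f x a i ∈ Xs (a i)} := by
  ext x
  constructor
  · rintro ⟨⟨b, a⟩, ⟨hb, ha⟩, rfl⟩
    exact ⟨⟨b, hb, rfl⟩, a, ha⟩
  · rintro ⟨⟨b, hb, rfl⟩, a, ha⟩
    exact ⟨(b, a), ⟨hb, ha⟩, rfl⟩

section Contractive

variable {K : ℝ≥0}

section PseudoEMetricSpace

variable [PseudoEMetricSpace X]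

theorem ediam_cylinder_le (hf : ∀ j, LipschitzOnWith K (f j) (Xs j)) (k : ℕ) (b : ℕ → Fin n) :
    ediam (cylinder f Xs k b) ≤ K ^ (k + 1) * ⨆ j, ediam (Xs j) := by
  induction k generalizing b with
  | zero =>
    rw [zero_add, pow_one]
    exact ediam_image_le_iff.2 fun x hx y hy => (hf (b 0)).edist_le_mul_of_le hx hy <|
      (edist_le_ediam_of_mem hx hy).trans (le_iSup (fun j => ediam (Xs j)) (b 0))
  | succ k ih =>
    rw [pow_succ', mul_assoc]
    exact ediam_image_le_iff.2 fun x hx y hy => (hf (b 0)).edist_le_mul_of_le hx.2 hy.2 <|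
      (edist_le_ediam_of_mem hx.1 hy.1).trans (ih _)

theorem tendsto_ediam_cylinder (hK : K < 1) (hf : ∀ j, LipschitzOnWith K (f j) (Xs j))
    (hdiam : ∀ j, ediam (Xs j) ≠ ∞) (b : ℕ → Fin n) :
    Tendsto (fun k => ediam (cylinder f Xs k b)) atTop (𝓝 0) := by
  have hpow : Tendsto (fun k => (K : ℝ≥0∞) ^ (k + 1)) atTop (𝓝 0) :=
    (ENNReal.tendsto_pow_atTop_nhds_zero_of_lt_one (ENNReal.coe_lt_one_iff.2 hK)).comp
      (tendsto_add_atTop_nat 1)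
  have hbound : Tendsto (fun k => (K : ℝ≥0∞) ^ (k + 1) * ⨆ j, ediam (Xs j)) atTop (𝓝 0) := by
    simpa only [zero_mul] using
      ENNReal.Tendsto.mul_const hpow (Or.inr (iSup_ne_top hdiam))
  exact tendsto_of_tendsto_of_tendsto_of_le_of_le tendsto_const_nhds hbound
    (fun _ => zero_le) fun k => ediam_cylinder_le hf k b

theorem IsAddress.tendsto_of_mem_cylinder (hK : K < 1)
    (hf : ∀ j, LipschitzOnWith K (f j) (Xs j)) (hdiam : ∀ j, ediam (Xs j) ≠ ∞)
    {b : ℕ → Fin n} {x : X} (hx : IsAddress f Xs b x) {u : ℕ → X}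
    (hu : ∀ k, u k ∈ cylinder f Xs k b) : Tendsto u atTop (𝓝 x) :=
  tendsto_iff_edist_tendsto_0.2 <| tendsto_of_tendsto_of_tendsto_of_le_of_le tendsto_const_nhds
    (tendsto_ediam_cylinder hK hf hdiam b) (fun _ => zero_le)
    fun k => edist_le_ediam_of_mem (hu k) (hx k)

theorem IsAddress.mem_domain_of_mem_codeSpace (hK : K < 1)
    (hf : ∀ j, LipschitzOnWith K (f j) (Xs j)) (hdiam : ∀ j, ediam (Xs j) ≠ ∞)
    {b : ℕ → Fin n} {x : X} (hx : IsAddress f Xs (fun j => b (j + 1)) x)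
    (hb : b ∈ codeSpace f Xs) (hclosed : IsClosed (Xs (b 0))) : x ∈ Xs (b 0) := by
  choose _ u hu _ using fun k => hb (k + 1)
  have hlim : Tendsto u atTop (𝓝 x) :=
    hx.tendsto_of_mem_cylinder hK hf hdiam fun k => (hu k).1
  exact hclosed.mem_of_tendsto hlim (Eventually.of_forall fun k => (hu k).2)

end PseudoEMetricSpace

variable [EMetricSpace X] {π : (ℕ → Fin n) → X}

theorem IsAddress.codeMap_eq (hK : K < 1) (hf : ∀ j, LipschitzOnWith K (f j) (Xs j))
    (hdiam : ∀ j, ediam (Xs j) ≠ ∞) (hπ : ∀ b ∈ codeSpace f Xs, IsAddress f Xs b (π b))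
    {b : ℕ → Fin n} {x : X} (hx : IsAddress f Xs b x) : π b = x :=
  tendsto_nhds_unique tendsto_const_nhds <|
    hx.tendsto_of_mem_cylinder hK hf hdiam (hπ b hx.mem_codeSpace)

theorem image_codeSpace_eq_gfp_hutchinson (hK : K < 1)
    (hf : ∀ j, LipschitzOnWith K (f j) (Xs j)) (hdiam : ∀ j, ediam (Xs j) ≠ ∞)
    (hXs : ∀ j, IsClosed (Xs j)) (hπ : ∀ b ∈ codeSpace f Xs, IsAddress f Xs b (π b)) :
    π '' codeSpace f Xs = (hutchinson f Xs).gfp := by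
  apply subset_antisymm
  · apply (hutchinson f Xs).le_gfp
    rintro _ ⟨b, hb, rfl⟩
    have hσb := shift_mem_codeSpace hb
    have hmem : π (fun j => b (j + 1)) ∈ Xs (b 0) :=
      (hπ _ hσb).mem_domain_of_mem_codeSpace hK hf hdiam hb (hXs _)
    have hmap : π b = f (b 0) (π fun j => b (j + 1)) :=
      ((hπ _ hσb).map hmem).codeMap_eq hK hf hdiam hπ
    exact mem_hutchinson.2 ⟨b 0, _, ⟨⟨_, hσb, rfl⟩, hmem⟩, hmap.symm⟩
  · intro x hx
    obtain ⟨b, hb⟩ :=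
      exists_isAddress_of_subset_hutchinson (hutchinson f Xs).map_gfp.ge hx
    exact ⟨b, hb.mem_codeSpace, hb.codeMap_eq hK hf hdiam hπ⟩

theorem codeMap_concat (hK : K < 1) (hf : ∀ j, LipschitzOnWith K (f j) (Xs j))
    (hdiam : ∀ j, ediam (Xs j) ≠ ∞) (hπ : ∀ b ∈ codeSpace f Xs, IsAddress f Xs b (π b))
    {b : ℕ → Fin n} (hb : b ∈ codeSpace f Xs) {j : Fin n} (hj : π b ∈ Xs j) :
    π (concat b j) = f j (π b) :=
  ((hπ b hb).map_concat hj).codeMap_eq hK hf hdiam hπ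

theorem shift_mem_extShiftSpace (hK : K < 1) (hf : ∀ j, LipschitzOnWith K (f j) (Xs j))
    (hdiam : ∀ j, ediam (Xs j) ≠ ∞) (hπ : ∀ b ∈ codeSpace f Xs, IsAddress f Xs b (π b))
    {b a : ℕ → Fin n} (h : (b, a) ∈ extShiftSpace f Xs π) :
    (concat b (a 0), fun j => a (j + 1)) ∈ extShiftSpace f Xs π := by
  obtain ⟨hb, ha⟩ := h
  refine ⟨((hπ b hb).map_concat (ha 0)).mem_codeSpace, fun i => ?_⟩
  simpa only [codeMap_concat hK hf hdiam hπ hb (ha 0), orbitSeq_shift] using ha (i + 1)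

end Contractive

end LocalIFS

theorem extShiftSpace_props_general {X : Type*} [EMetricSpace X] {n : ℕ}
    (Xs : Fin n → Set X) (hXs : ∀ j, IsClosed (Xs j)) (hdiam : ∀ j, ediam (Xs j) ≠ ∞)
    (f : Fin n → X → X)
    (lam : Fin n → ℝ≥0) (hlam1 : ∀ j, lam j < 1)
    (hcontr : ∀ j, LipschitzOnWith (lam j) (f j) (Xs j))
    (F : Set X → Set X) (hF : ∀ B, F B = ⋃ j, f j '' (B ∩ Xs j))
    (A : Set X) (hA : A = ⋃₀ {B : Set X | F B = B})
    (π : (ℕ → Fin n) → X)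
    (hπ : ∀ b ∈ codeSpace f Xs, ∀ k : ℕ, π b ∈ cylinder f Xs k b) :
    ((fun p : (ℕ → Fin n) × (ℕ → Fin n) => π p.1) '' extShiftSpace f Xs π
        = {x ∈ A | ∃ a : ℕ → Fin n, ∀ i : ℕ, orbitSeq f x a i ∈ Xs (a i)}) ∧
      (∀ p ∈ extShiftSpace f Xs π,
        (concat p.1 (p.2 0), fun j => p.2 (j + 1)) ∈ extShiftSpace f Xs π ∧
          π (concat p.1 (p.2 0)) = f (p.2 0) (π p.1)) := by
  have hK : Finset.univ.sup lam < 1 := (Finset.sup_lt_iff one_pos).2 fun j _ => hlam1 j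
  have hf (j : Fin n) : LipschitzOnWith (Finset.univ.sup lam) (f j) (Xs j) :=
    (hcontr j).weaken (Finset.le_sup (Finset.mem_univ j))
  obtain rfl : F = hutchinson f Xs := funext hF
  have hA_gfp : A = (hutchinson f Xs).gfp :=
    hA.trans (hutchinson f Xs).isGreatest_gfp.isLUB.sSup_eq
  refine ⟨?_, fun p hp => ⟨shift_mem_extShiftSpace hK hf hdiam hπ hp,
    codeMap_concat hK hf hdiam hπ hp.1 (hp.2 0)⟩⟩
  rw [image_extShiftSpace, image_codeSpace_eq_gfp_hutchinson hK hf hdiam hXs hπ, hA_gfp]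

/-- For a contractive local IFS with nonempty local attractor `A`,
code space `Σ` and code map `π`, the extended shift space
`Σ̂ = {(b,a) : b ∈ Σ, a admissible from π b}` satisfies:
(1) `{π b : (b,a) ∈ Σ̂}` equals `A^∞`, the set of points of `A` with infinite orbits;
(2) the extended two-sided shift `ŝ(b,a) = (b ∗ a 0, σ a)` maps `Σ̂` into itself,
and `π (b ∗ a 0) = f (a 0) (π b)` for every `(b,a) ∈ Σ̂`. -/
theorem extShiftSpace_props {X : Type*} [MetricSpace X] [CompactSpace X]
    {n : ℕ} (hn : 0 < n)
    (Xs : Fin n → Set X) (hXs : ∀ j, IsClosed (Xs j))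
    (f : Fin n → X → X)
    (lam : Fin n → ℝ) (hlam0 : ∀ j, 0 ≤ lam j) (hlam1 : ∀ j, lam j < 1)
    (hcontr : ∀ j, ∀ x ∈ Xs j, ∀ y ∈ Xs j, dist (f j x) (f j y) ≤ lam j * dist x y)
    (F : Set X → Set X) (hF : ∀ B, F B = ⋃ j, f j '' (B ∩ Xs j))
    (A : Set X) (hA : A = ⋃₀ {B : Set X | F B = B}) (hAne : A.Nonempty)
    (π : (ℕ → Fin n) → X)
    (hπ : ∀ b ∈ codeSpace f Xs, ∀ k : ℕ, π b ∈ cylinder f Xs k b) :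
    ((fun p : (ℕ → Fin n) × (ℕ → Fin n) => π p.1) '' extShiftSpace f Xs π
        = {x ∈ A | ∃ a : ℕ → Fin n, ∀ i : ℕ, orbitSeq f x a i ∈ Xs (a i)}) ∧
      (∀ p ∈ extShiftSpace f Xs π,
        (concat p.1 (p.2 0), fun j => p.2 (j + 1)) ∈ extShiftSpace f Xs π ∧
          π (concat p.1 (p.2 0)) = f (p.2 0) (π p.1)) := by
  exact extShiftSpace_props_general Xs hXs (fun j => (hXs j).isCompact.isBounded.ediam_ne_top) f
    (fun j => ⟨lam j, hlam0 j⟩) hlam1 (fun j => .of_dist_le_mul (hcontr j)) F hF A hA π hπ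
end
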